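/- For every (z,w) ∈ A, writing (z_n, w_n) = f^n(z,w), one has limsup_{n→∞} n·|z_n − w_n| < 1. -/

import Mathlib

open Filter Topology

/-- The restriction of the map `f(z,w) = (z(1-(z-w)), w(1+(z-w)))` to `ℝ² ⊂ ℂ²`
(`f` maps `ℝ²` into `ℝ²`). -/
noncomputable def fR : ℝ × ℝ → ℝ × ℝ :=
  fun p => (p.1 * (1 - (p.1 - p.2)), p.2 * (1 + (p.1 - p.2)))

/-- The triangle `A = {(z,w) ∈ ℝ² : z > 0, w > 0, z + w < 1}`. -/
def A : Set (ℝ × ℝ) := {p : ℝ × ℝ | 0 < p.1 ∧ 0 < p.2 ∧ p.1 + p.2 < 1}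

/-- The triangle `A` is invariant under `fR`. -/
theorem fR_mem_A {p : ℝ × ℝ} (hp : p ∈ A) : fR p ∈ A := by
  obtain ⟨hz, hw, hs⟩ := hp
  refine ⟨mul_pos hz (by linarith), mul_pos hw (by linarith), ?_⟩
  simp only [fR]
  nlinarith [sq_nonneg (p.1 - p.2)]

/-- The ratio `zw / (z + w)` does not decrease along orbits in `A`. -/
theorem mul_add_le_mul_fR {p : ℝ × ℝ} {c : ℝ} (hp : p ∈ A) (hc : 0 ≤ c)
    (h : c * (p.1 + p.2) ≤ p.1 * p.2) :
    c * ((fR p).1 + (fR p).2) ≤ (fR p).1 * (fR p).2 := by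
  obtain ⟨hz, hw, hs⟩ := hp
  have hx : 0 ≤ 1 - (p.1 - p.2) ^ 2 := by nlinarith
  have hd : 0 ≤ c * ((p.1 - p.2) ^ 2 * (1 - (p.1 + p.2))) :=
    mul_nonneg hc (mul_nonneg (sq_nonneg _) (by linarith))
  simp only [fR]
  nlinarith [mul_le_mul_of_nonneg_right h hx]

/-- The difference of the coordinates contracts by the factor `1 - (z + w)`. -/
theorem fR_fst_sub_snd (p : ℝ × ℝ) :
    (fR p).1 - (fR p).2 = (1 - (p.1 + p.2)) * (p.1 - p.2) := by
  simp only [fR]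
  ring

/-- Along an orbit in `A` the difference of the coordinates decays geometrically. -/
theorem abs_iterate_fR_sub_le {p : ℝ × ℝ} {c : ℝ} (hp : p ∈ A) (hc : 0 ≤ c)
    (h : c * (p.1 + p.2) ≤ p.1 * p.2) (n : ℕ) :
    |(fR^[n] p).1 - (fR^[n] p).2| ≤ (1 - c) ^ n := by
  have hinv : fR^[n] p ∈ A ∧
      c * ((fR^[n] p).1 + (fR^[n] p).2) ≤ (fR^[n] p).1 * (fR^[n] p).2 ∧
      |(fR^[n] p).1 - (fR^[n] p).2| ≤ (1 - c) ^ n := by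
    induction n with
    | zero =>
      obtain ⟨hz, hw, hs⟩ := id hp
      exact ⟨hp, h, by simpa using abs_le.2 ⟨by linarith, by linarith⟩⟩
    | succ n ih =>
      rw [Function.iterate_succ_apply']
      generalize fR^[n] p = q at ih ⊢
      obtain ⟨hq, hcq, hle⟩ := ih
      refine ⟨fR_mem_A hq, mul_add_le_mul_fR hq hc hcq, ?_⟩
      obtain ⟨hz, hw, hs⟩ := hq
      have hcs : c ≤ q.1 + q.2 := by
        refine le_of_mul_le_mul_right (hcq.trans ?_) (add_pos hz hw)
        nlinarith [mul_pos hz hw, sq_nonneg q.1, sq_nonneg q.2]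
      rw [fR_fst_sub_snd, abs_mul, abs_of_pos (by linarith), pow_succ']
      exact mul_le_mul (by linarith) hle (abs_nonneg _) (by linarith)
  exact hinv.2.2

/-- For every `(z,w) ∈ A`, `limsup_{n→∞} n·|z_n - w_n| < 1`. -/
theorem limsup_rate_lt_one :
    ∀ p ∈ A, Filter.limsup (fun n : ℕ => (n : ℝ) * |(fR^[n] p).1 - (fR^[n] p).2|) atTop < 1 := by
  intro p hp
  obtain ⟨hz, hw, hs⟩ := id hp
  have hc : 0 < p.1 * p.2 := mul_pos hz hw
  have hlim : Tendsto (fun n : ℕ => (n : ℝ) * |(fR^[n] p).1 - (fR^[n] p).2|) atTop (𝓝 0) :=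
    squeeze_zero (fun n => by positivity)
      (fun n => mul_le_mul_of_nonneg_left
        (abs_iterate_fR_sub_le hp hc.le (by nlinarith) n) n.cast_nonneg)
      (tendsto_self_mul_const_pow_of_lt_one (by nlinarith) (by linarith))
  rw [hlim.limsup_eq]
  exact one_pos
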